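/- In the construction of Theorem 1: with Theta = [0, a_1, a_2, ...] badly approximable with partial quotients of degree at most M, and Phi = [0, a_{n_1}, ..., a_1, t_1, a_{n_2}, ..., a_1, t_2, ...] with deg t_j in {M+1, M+2}, let s_{m_j} be the denominator of the m_j-th convergent of Phi (m_j = n_1+...+n_j+(j-1)). Then ||s_{m_j} Theta|| <= 2^{deg s_{m_j} - 2 deg q_{n_j}} <= |s_{m_j}|^{-1} * 2^{2(M+2)(m_j - n_j)}, where q_{n_j} is the n_j-th convergent denominator of Theta. -/

import Mathlib

open Polynomial Filter

noncomputable section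
open scoped Classical

namespace Littlewood

variable (k : Type*) [Field k]

/-- The element `X` of `k((X⁻¹))`: the inverse of the Laurent-series variable `t = X⁻¹`. -/
def XLS : LaurentSeries k := (HahnSeries.single (1 : ℤ) (1 : k))⁻¹

variable {k}

/-- Embedding of `k[X]` into `k((X⁻¹))`, sending the polynomial variable to `X`. -/
def emb (p : Polynomial k) : LaurentSeries k := Polynomial.aeval (XLS k) p

/-- The degree of a Laurent series in `X⁻¹`: if `F = ∑_{h ≥ -m} f_h X^{-h}` with
`f_{-m} ≠ 0` then `deg F = m`. -/
def deg (F : LaurentSeries k) : ℤ := -F.order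

/-- The norm `|F| = 2 ^ deg F`, with `|0| = 0`. -/
def lnorm (F : LaurentSeries k) : ℝ := if F = 0 then 0 else (2 : ℝ) ^ (deg F)

/-- Fractional part: the part of the series comprising only negative powers of `X`. -/
def frac (F : LaurentSeries k) : LaurentSeries k where
  coeff n := if 1 ≤ n then F.coeff n else 0
  isPWO_support' := F.isPWO_support'.mono (fun n hn => by
    simp only [Function.mem_support] at hn ⊢
    intro h
    exact hn (by simp [h]))

/-- `‖F‖`: the norm of the fractional part of `F`. -/
def fnorm (F : LaurentSeries k) : ℝ := lnorm (frac F)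

/-- `F` is a rational function. -/
def IsRat (F : LaurentSeries k) : Prop :=
  ∃ p q : Polynomial k, q ≠ 0 ∧ F * emb q = emb p

/-- The polynomial part of a Laurent series (the part with nonnegative powers of `X`). -/
def polyPart (F : LaurentSeries k) : Polynomial k :=
  ∑ i ∈ Finset.range ((-F.order).toNat + 1), Polynomial.C (F.coeff (-(i : ℤ))) * Polynomial.X ^ i

/-- The complete quotients of the continued fraction algorithm applied to `F`. -/
def cfRem (F : LaurentSeries k) : ℕ → LaurentSeries k
  | 0 => F
  | n + 1 => (cfRem F n - emb (polyPart (cfRem F n)))⁻¹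

/-- The partial quotients of the continued fraction expansion of `F`. -/
def pq (F : LaurentSeries k) (n : ℕ) : Polynomial k := polyPart (cfRem F n)

/-- Denominators `q_n` of the convergents of the continued fraction with
partial quotients `a`. -/
def den (a : ℕ → Polynomial k) : ℕ → Polynomial k
  | 0 => 1
  | 1 => a 1
  | n + 2 => a (n + 2) * den a (n + 1) + den a n

/-- Numerators `p_n` of the convergents. -/
def num (a : ℕ → Polynomial k) : ℕ → Polynomial k
  | 0 => a 0
  | 1 => a 1 * a 0 + 1
  | n + 2 => a (n + 2) * num a (n + 1) + num a n

/-- The value of a finite continued fraction `[b_0, b_1, …, b_m]` over `k[X]`. -/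
def finCF : List (Polynomial k) → LaurentSeries k
  | [] => 0
  | [b] => emb b
  | b :: l => emb b + (finCF l)⁻¹

/-- `F` is badly approximable. -/
def Bad (F : LaurentSeries k) : Prop :=
  ∃ c : ℝ, 0 < c ∧ ∀ q : Polynomial k, q ≠ 0 → c ≤ lnorm (emb q) * fnorm (emb q * F)

/-!
Write `aᵢ`, `pₗ / qₗ` for the partial quotients and the convergents of `Θ`, and `sᵢ` for the
denominators formed from `b`, where `b_{u+1}, …, b_{u+n}` is `aₙ, …, a₁`. Splitting the continuant
of `b` at `u` gives the mirror formula `s_{u+n} = qₙ sᵤ + qₙ₋₁ sᵤ₋₁`, in which the first term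
dominates, so `|s_{u+n}| = |qₙ| |sᵤ|`. Replacing each `qₗ` by `qₗ Θ - pₗ`, which has norm
`1 / |qₗ₊₁|`, shows that `s_{u+n} Θ` is within `|sᵤ| / |qₙ| = |s_{u+n}| / |qₙ|²` of a polynomial.
The second estimate only bounds `|sᵤ|` by the degrees of `b₁, …, bᵤ`.
-/

section Norm

theorem lnorm_of_ne_zero {F : LaurentSeries k} (hF : F ≠ 0) : lnorm F = 2 ^ (-F.order) :=
  if_neg hF

theorem lnorm_le_zpow_iff {F : LaurentSeries k} {d : ℤ} :
    lnorm F ≤ 2 ^ d ↔ ∀ z < -d, F.coeff z = 0 := by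
  rcases eq_or_ne F 0 with rfl | hF
  · simp only [lnorm, if_true, HahnSeries.coeff_zero, implies_true, iff_true]
    positivity
  · rw [lnorm_of_ne_zero hF, zpow_le_zpow_iff_right₀ one_lt_two, neg_le,
      HahnSeries.le_order_iff_forall hF]

theorem lnorm_nonneg (F : LaurentSeries k) : 0 ≤ lnorm F := by
  unfold lnorm
  split_ifs <;> positivity

theorem isNonarchimedean_lnorm : IsNonarchimedean (lnorm (k := k)) := by
  intro F G
  rcases eq_or_ne F 0 with rfl | hF
  · simp
  rcases eq_or_ne G 0 with rfl | hG
  · simp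
  rw [lnorm_of_ne_zero hF, lnorm_of_ne_zero hG,
    ← (zpow_right_mono₀ (one_le_two (α := ℝ))).map_max, lnorm_le_zpow_iff]
  intro z hz
  rw [HahnSeries.coeff_add, HahnSeries.coeff_eq_zero_of_lt_order (by omega),
    HahnSeries.coeff_eq_zero_of_lt_order (by omega), add_zero]

theorem lnorm_mul (F G : LaurentSeries k) : lnorm (F * G) = lnorm F * lnorm G := by
  rcases eq_or_ne F 0 with rfl | hF
  · simp [lnorm]
  rcases eq_or_ne G 0 with rfl | hG
  · simp [lnorm]
  rw [lnorm_of_ne_zero hF, lnorm_of_ne_zero hG, lnorm_of_ne_zero (mul_ne_zero hF hG),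
    HahnSeries.order_mul hF hG, neg_add, zpow_add₀ two_ne_zero]

variable (k) in
/-- The norm `lnorm` as an absolute value on the field `k((X⁻¹))`, giving access to the general
facts about absolute values. -/
def lnormAbs : AbsoluteValue (LaurentSeries k) ℝ where
  toFun := lnorm
  map_mul' := lnorm_mul
  nonneg' := lnorm_nonneg
  eq_zero' F := by
    unfold lnorm
    split_ifs with hF
    · simp [hF]
    · simp [hF, zpow_ne_zero]
  add_le' _ _ := isNonarchimedean_lnorm.add_le lnorm_nonneg

theorem lnorm_zero : lnorm (0 : LaurentSeries k) = 0 := (lnormAbs k).map_zero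

theorem lnorm_one : lnorm (1 : LaurentSeries k) = 1 := (lnormAbs k).map_one

theorem lnorm_neg (F : LaurentSeries k) : lnorm (-F) = lnorm F := (lnormAbs k).map_neg F

theorem lnorm_inv (F : LaurentSeries k) : lnorm F⁻¹ = (lnorm F)⁻¹ := map_inv₀ (lnormAbs k) F

theorem lnorm_pos {F : LaurentSeries k} (hF : F ≠ 0) : 0 < lnorm F := (lnormAbs k).pos hF

theorem lnorm_add_eq_left {F G : LaurentSeries k} (h : lnorm G < lnorm F) :
    lnorm (F + G) = lnorm F :=
  IsNonarchimedean.add_eq_left_of_lt (f := lnormAbs k) isNonarchimedean_lnorm h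

end Norm

section Embedding

theorem emb_zero : emb (0 : k[X]) = 0 := map_zero _

theorem emb_one : emb (1 : k[X]) = 1 := map_one _

theorem emb_add (p q : k[X]) : emb (p + q) = emb p + emb q := map_add _ p q

theorem emb_mul (p q : k[X]) : emb (p * q) = emb p * emb q := map_mul _ p q

theorem emb_monomial (i : ℕ) (c : k) : emb (monomial i c) = HahnSeries.single (-(i : ℤ)) c := by
  rw [emb, aeval_monomial, XLS, HahnSeries.inv_single, HahnSeries.single_pow,
    HahnSeries.algebraMap_apply']
  simp [HahnSeries.single_mul_single]

theorem coeff_emb_neg (p : k[X]) (i : ℕ) : (emb p).coeff (-(i : ℤ)) = p.coeff i := by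
  induction p using Polynomial.induction_on' with
  | add p q hp hq => rw [emb_add, HahnSeries.coeff_add, hp, hq, coeff_add]
  | monomial j c => simp [emb_monomial, HahnSeries.coeff_single, coeff_monomial, eq_comm]

theorem coeff_emb_of_pos (p : k[X]) {z : ℤ} (hz : 0 < z) : (emb p).coeff z = 0 := by
  induction p using Polynomial.induction_on' with
  | add p q hp hq => rw [emb_add, HahnSeries.coeff_add, hp, hq, add_zero]
  | monomial j c => rw [emb_monomial, HahnSeries.coeff_single_of_ne (by omega)]

theorem lnorm_emb_le {p : k[X]} {d : ℕ} (hp : p.natDegree ≤ d) : lnorm (emb p) ≤ 2 ^ d := by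
  rw [← zpow_natCast, lnorm_le_zpow_iff]
  intro z hz
  obtain ⟨i, rfl⟩ : ∃ i : ℕ, z = -(i : ℤ) := ⟨z.natAbs, by omega⟩
  rw [coeff_emb_neg, coeff_eq_zero_of_natDegree_lt (by omega)]

theorem lnorm_emb {p : k[X]} (hp : p ≠ 0) : lnorm (emb p) = 2 ^ p.natDegree := by
  refine (lnorm_emb_le le_rfl).antisymm ?_
  have hlead : (emb p).coeff (-(p.natDegree : ℤ)) ≠ 0 := by
    rw [coeff_emb_neg]
    exact leadingCoeff_ne_zero.mpr hp
  rw [lnorm_of_ne_zero (HahnSeries.ne_zero_of_coeff_ne_zero hlead), ← zpow_natCast]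
  refine zpow_le_zpow_right₀ one_le_two (le_neg_of_le_neg ?_)
  exact HahnSeries.order_le_of_coeff_ne_zero hlead

theorem two_zpow_natDegree_sub {p q : k[X]} (hp : p ≠ 0) (hq : q ≠ 0) :
    (2 : ℝ) ^ ((p.natDegree : ℤ) - 2 * (q.natDegree : ℤ)) =
      lnorm (emb p) / lnorm (emb q) ^ 2 := by
  rw [lnorm_emb hp, lnorm_emb hq, zpow_sub₀ two_ne_zero, mul_comm, zpow_mul]
  norm_cast

theorem emb_ne_zero {p : k[X]} (hp : p ≠ 0) : emb p ≠ 0 :=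
  (lnormAbs k).pos_iff.mp ((pow_pos two_pos _).trans_eq (lnorm_emb hp).symm)

theorem one_lt_lnorm_emb_iff {p : k[X]} : 1 < lnorm (emb p) ↔ 0 < p.natDegree := by
  rcases eq_or_ne p 0 with rfl | hp
  · simp [emb_zero, lnorm_zero]
  · rw [lnorm_emb hp, Nat.pos_iff_ne_zero]
    exact ⟨fun h hdeg => by simp [hdeg] at h, one_lt_pow₀ one_lt_two⟩

theorem frac_coeff (F : LaurentSeries k) (z : ℤ) :
    (frac F).coeff z = if 1 ≤ z then F.coeff z else 0 :=
  rfl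

theorem polyPart_coeff (F : LaurentSeries k) (i : ℕ) :
    (polyPart F).coeff i = F.coeff (-(i : ℤ)) := by
  simp only [polyPart, finsetSum_coeff, coeff_C_mul, coeff_X_pow, mul_ite, mul_one, mul_zero,
    Finset.sum_ite_eq, ite_eq_left_iff, Finset.mem_range]
  exact fun h => (HahnSeries.coeff_eq_zero_of_lt_order (by omega)).symm

theorem sub_emb_polyPart (F : LaurentSeries k) : F - emb (polyPart F) = frac F := by
  ext z
  rw [HahnSeries.coeff_sub, frac_coeff]
  split_ifs with hz
  · rw [coeff_emb_of_pos _ hz, sub_zero]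
  · obtain ⟨i, rfl⟩ : ∃ i : ℕ, z = -(i : ℤ) := ⟨z.natAbs, by omega⟩
    rw [coeff_emb_neg, polyPart_coeff, sub_self]

theorem frac_sub_emb (F : LaurentSeries k) (p : k[X]) : frac (F - emb p) = frac F := by
  ext z
  simp only [frac_coeff]
  split_ifs with hz
  · rw [HahnSeries.coeff_sub, coeff_emb_of_pos _ hz, sub_zero]
  · rfl

theorem lnorm_frac_lt_one (F : LaurentSeries k) : lnorm (frac F) < 1 := by
  have hle : lnorm (frac F) ≤ 2 ^ (-1 : ℤ) :=
    lnorm_le_zpow_iff.mpr fun z hz => if_neg (by omega)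
  exact hle.trans_lt (by norm_num)

theorem lnorm_frac_le (F : LaurentSeries k) : lnorm (frac F) ≤ lnorm F := by
  rcases eq_or_ne F 0 with rfl | hF
  · rw [show frac (0 : LaurentSeries k) = 0 by ext; simp [frac_coeff]]
  · rw [lnorm_of_ne_zero hF, lnorm_le_zpow_iff, neg_neg]
    intro z hz
    rw [frac_coeff, HahnSeries.coeff_eq_zero_of_lt_order hz, ite_self]

theorem fnorm_le_lnorm_sub_emb (F : LaurentSeries k) (p : k[X]) :
    fnorm F ≤ lnorm (F - emb p) :=
  (congrArg lnorm (frac_sub_emb F p)).symm.trans_le (lnorm_frac_le _)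

theorem lnorm_emb_polyPart {F : LaurentSeries k} (hF : 1 ≤ lnorm F) :
    lnorm (emb (polyPart F)) = lnorm F := by
  have hlt : lnorm (-frac F) < lnorm F := by
    rw [lnorm_neg]
    exact (lnorm_frac_lt_one F).trans_le hF
  rw [← lnorm_add_eq_left hlt, ← sub_emb_polyPart, neg_sub, add_sub_cancel]

end Embedding

section Irrational

theorem isRat_zero : IsRat (0 : LaurentSeries k) :=
  ⟨0, 1, one_ne_zero, by rw [zero_mul, emb_zero]⟩

theorem IsRat.inv {F : LaurentSeries k} (hF : IsRat F) : IsRat F⁻¹ := by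
  rcases eq_or_ne F 0 with rfl | hF0
  · rwa [inv_zero]
  obtain ⟨p, q, hq, hpq⟩ := hF
  refine ⟨q, p, ?_, by rw [← hpq, inv_mul_cancel_left₀ hF0]⟩
  rintro rfl
  exact mul_ne_zero hF0 (emb_ne_zero hq) (hpq.trans emb_zero)

theorem IsRat.of_sub_emb {F : LaurentSeries k} {r : k[X]} (hF : IsRat (F - emb r)) :
    IsRat F := by
  obtain ⟨p, q, hq, hpq⟩ := hF
  exact ⟨p + r * q, q, hq, by rw [emb_add, emb_mul, ← hpq]; ring⟩

theorem frac_ne_zero {F : LaurentSeries k} (hF : ¬ IsRat F) : frac F ≠ 0 := fun h =>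
  hF <| IsRat.of_sub_emb (r := polyPart F) <| by
    rw [sub_emb_polyPart, h]
    exact isRat_zero

theorem cfRem_succ (F : LaurentSeries k) (i : ℕ) : cfRem F (i + 1) = (frac (cfRem F i))⁻¹ := by
  rw [cfRem, sub_emb_polyPart]

theorem not_isRat_cfRem {F : LaurentSeries k} (hF : ¬ IsRat F) (i : ℕ) :
    ¬ IsRat (cfRem F i) := by
  induction i with
  | zero => exact hF
  | succ i ih =>
    intro h
    have hsub : IsRat (cfRem F i - emb (polyPart (cfRem F i))) := by
      simpa only [cfRem, inv_inv] using h.inv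
    exact ih hsub.of_sub_emb

theorem one_lt_lnorm_cfRem_succ {F : LaurentSeries k} (hF : ¬ IsRat F) (i : ℕ) :
    1 < lnorm (cfRem F (i + 1)) := by
  rw [cfRem_succ, lnorm_inv]
  exact (one_lt_inv₀ (lnorm_pos (frac_ne_zero (not_isRat_cfRem hF i)))).mpr (lnorm_frac_lt_one _)

theorem lnorm_emb_pq_succ {F : LaurentSeries k} (hF : ¬ IsRat F) (i : ℕ) :
    lnorm (emb (pq F (i + 1))) = lnorm (cfRem F (i + 1)) :=
  lnorm_emb_polyPart (one_lt_lnorm_cfRem_succ hF i).le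

theorem natDegree_pq_succ_pos {F : LaurentSeries k} (hF : ¬ IsRat F) (i : ℕ) :
    0 < (pq F (i + 1)).natDegree := by
  rw [← one_lt_lnorm_emb_iff, lnorm_emb_pq_succ hF]
  exact one_lt_lnorm_cfRem_succ hF i

end Irrational

section Continuants

/-- The denominator `q_{i-1}` of the preceding convergent, with `q_{-1} = 0`. -/
def prevDen (a : ℕ → k[X]) : ℕ → k[X]
  | 0 => 0
  | i + 1 => den a i

/-- The numerator `p_{i-1}` of the preceding convergent, with `p_{-1} = 1`. -/
def prevNum (a : ℕ → k[X]) : ℕ → k[X]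
  | 0 => 1
  | i + 1 => num a i

theorem den_succ (a : ℕ → k[X]) (i : ℕ) : den a (i + 1) = a (i + 1) * den a i + prevDen a i := by
  cases i <;> simp [prevDen, den]

theorem num_succ (a : ℕ → k[X]) (i : ℕ) : num a (i + 1) = a (i + 1) * num a i + prevNum a i := by
  cases i <;> simp [prevNum, num]

theorem den_mirror {a b : ℕ → k[X]} {u n : ℕ}
    (h : ∀ i, 1 ≤ i → i ≤ n → b (u + i) = a (n + 1 - i)) :
    den b (u + n) = den a n * den b u + prevDen a n * prevDen b u := by
  induction n generalizing u with
  | zero => simp [prevDen, den]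
  | succ n ih =>
    have hfirst : b (u + 1) = a (n + 1) := h 1 le_rfl (by omega)
    have hrest : ∀ i, 1 ≤ i → i ≤ n → b (u + 1 + i) = a (n + 1 - i) := fun i hi hin => by
      rw [add_assoc, h (1 + i) (by omega) (by omega)]
      congr 1
      omega
    rw [add_comm n, ← add_assoc, ih hrest, add_comm 1 n, den_succ b, den_succ a, hfirst, prevDen,
      prevDen]
    ring

variable {a b : ℕ → k[X]}

theorem lnorm_emb_prevDen_lt (ha : ∀ i, 0 < (a (i + 1)).natDegree) (i : ℕ) :
    lnorm (emb (prevDen a i)) < lnorm (emb (den a i)) := by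
  induction i with
  | zero => simp [prevDen, den, emb_zero, emb_one, lnorm_zero, lnorm_one]
  | succ i ih =>
    have hlt : lnorm (emb (den a i)) < lnorm (emb (a (i + 1) * den a i)) := by
      rw [emb_mul, lnorm_mul]
      exact lt_mul_of_one_lt_left ((lnorm_nonneg _).trans_lt ih) (one_lt_lnorm_emb_iff.mpr (ha i))
    rwa [prevDen, den_succ, emb_add, lnorm_add_eq_left (ih.trans hlt)]

theorem lnorm_emb_den_pos (ha : ∀ i, 0 < (a (i + 1)).natDegree) (i : ℕ) :
    0 < lnorm (emb (den a i)) :=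
  (lnorm_nonneg _).trans_lt (lnorm_emb_prevDen_lt ha i)

theorem den_ne_zero (ha : ∀ i, 0 < (a (i + 1)).natDegree) (i : ℕ) : den a i ≠ 0 := by
  intro h
  simpa [h, emb_zero, lnorm_zero] using lnorm_emb_den_pos ha i

theorem lnorm_emb_den_succ (ha : ∀ i, 0 < (a (i + 1)).natDegree) (i : ℕ) :
    lnorm (emb (den a (i + 1))) = lnorm (emb (a (i + 1))) * lnorm (emb (den a i)) := by
  have hlt : lnorm (emb (prevDen a i)) < lnorm (emb (a (i + 1)) * emb (den a i)) := by
    rw [lnorm_mul]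
    exact (lnorm_emb_prevDen_lt ha i).trans_le
      (le_mul_of_one_le_left (lnorm_nonneg _) (one_lt_lnorm_emb_iff.mpr (ha i)).le)
  rw [den_succ, emb_add, emb_mul, lnorm_add_eq_left hlt, lnorm_mul]

theorem lnorm_emb_den_le (ha : ∀ i, 0 < (a (i + 1)).natDegree) {B u : ℕ}
    (hB : ∀ i, 1 ≤ i → i ≤ u → (a i).natDegree ≤ B) : lnorm (emb (den a u)) ≤ 2 ^ (B * u) := by
  induction u with
  | zero => simp [den, emb_one, lnorm_one]
  | succ u ih =>
    rw [lnorm_emb_den_succ ha, mul_add_one, pow_add, mul_comm]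
    gcongr
    · exact lnorm_nonneg _
    · exact ih fun i hi hiu => hB i hi (by omega)
    · exact lnorm_emb_le (hB (u + 1) (by omega) le_rfl)

theorem lnorm_emb_den_mirror (ha : ∀ i, 0 < (a (i + 1)).natDegree)
    (hb : ∀ i, 0 < (b (i + 1)).natDegree) {u n : ℕ}
    (h : ∀ i, 1 ≤ i → i ≤ n → b (u + i) = a (n + 1 - i)) :
    lnorm (emb (den b (u + n))) = lnorm (emb (den a n)) * lnorm (emb (den b u)) := by
  have hlt : lnorm (emb (prevDen a n) * emb (prevDen b u)) <
      lnorm (emb (den a n) * emb (den b u)) := by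
    rw [lnorm_mul, lnorm_mul]
    exact mul_lt_mul'' (lnorm_emb_prevDen_lt ha n) (lnorm_emb_prevDen_lt hb u)
      (lnorm_nonneg _) (lnorm_nonneg _)
  rw [den_mirror h, emb_add, emb_mul, emb_mul, lnorm_add_eq_left hlt, lnorm_mul]

end Continuants

section Approximation

variable {F : LaurentSeries k}

theorem den_mul_sub_num (hF : ¬ IsRat F) (i : ℕ) :
    emb (den (pq F) i) * F - emb (num (pq F) i) =
      -((emb (prevDen (pq F) i) * F - emb (prevNum (pq F) i)) * frac (cfRem F i)) := by
  induction i with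
  | zero =>
    simp [den, num, prevDen, prevNum, emb_zero, emb_one, pq, cfRem, sub_emb_polyPart]
  | succ i ih =>
    have hinv : cfRem F (i + 1) * frac (cfRem F i) = 1 := by
      rw [cfRem_succ, inv_mul_cancel₀ (frac_ne_zero (not_isRat_cfRem hF i))]
    have hfrac : frac (cfRem F (i + 1)) = cfRem F (i + 1) - emb (pq F (i + 1)) :=
      (sub_emb_polyPart _).symm
    rw [den_succ, num_succ, hfrac, prevDen, prevNum]
    simp only [emb_add, emb_mul]
    linear_combination cfRem F (i + 1) * ih -
      (emb (prevDen (pq F) i) * F - emb (prevNum (pq F) i)) * hinv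

theorem lnorm_prevDen_mul_sub_prevNum (hF : ¬ IsRat F) (i : ℕ) :
    lnorm (emb (prevDen (pq F) i) * F - emb (prevNum (pq F) i)) =
      (lnorm (emb (den (pq F) i)))⁻¹ := by
  induction i with
  | zero => simp [den, prevDen, prevNum, emb_zero, emb_one, lnorm_neg, lnorm_one]
  | succ i ih =>
    rw [prevDen, prevNum, den_mul_sub_num hF, lnorm_neg, lnorm_mul, ih,
      lnorm_emb_den_succ (natDegree_pq_succ_pos hF), lnorm_emb_pq_succ hF, cfRem_succ, lnorm_inv,
      mul_inv_rev, inv_inv]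

theorem lnorm_den_mul_sub_num_le (hF : ¬ IsRat F) (i : ℕ) :
    lnorm (emb (den (pq F) i) * F - emb (num (pq F) i)) ≤ (lnorm (emb (den (pq F) i)))⁻¹ := by
  have hpos := natDegree_pq_succ_pos hF
  refine (lnorm_prevDen_mul_sub_prevNum hF (i + 1)).trans_le ?_
  exact inv_anti₀ (lnorm_emb_den_pos hpos i) (lnorm_emb_prevDen_lt hpos (i + 1)).le

theorem fnorm_den_mul_le_of_mirror (hF : ¬ IsRat F) {b : ℕ → k[X]}
    (hb : ∀ i, 0 < (b (i + 1)).natDegree) {u n : ℕ}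
    (hmirror : ∀ i, 1 ≤ i → i ≤ n → b (u + i) = pq F (n + 1 - i)) :
    fnorm (emb (den b (u + n)) * F) ≤ lnorm (emb (den b u)) / lnorm (emb (den (pq F) n)) := by
  have hsplit : emb (den b (u + n)) * F -
      emb (num (pq F) n * den b u + prevNum (pq F) n * prevDen b u) =
        (emb (den (pq F) n) * F - emb (num (pq F) n)) * emb (den b u) +
        (emb (prevDen (pq F) n) * F - emb (prevNum (pq F) n)) * emb (prevDen b u) := by
    rw [den_mirror hmirror]
    simp only [emb_add, emb_mul]
    ring
  apply (fnorm_le_lnorm_sub_emb _ _).trans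
  rw [hsplit, div_eq_inv_mul]
  refine (isNonarchimedean_lnorm _ _).trans (max_le ?_ ?_) <;> rw [lnorm_mul]
  · exact mul_le_mul_of_nonneg_right (lnorm_den_mul_sub_num_le hF n) (lnorm_nonneg _)
  · rw [lnorm_prevDen_mul_sub_prevNum hF]
    exact mul_le_mul_of_nonneg_left (lnorm_emb_prevDen_lt hb u).le (inv_nonneg.mpr (lnorm_nonneg _))

end Approximation

section Blocks

variable {n m : ℕ → ℕ}

theorem block_length_le (hm : ∀ j, m j = (∑ i ∈ Finset.Icc 1 j, n i) + (j - 1))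
    {j : ℕ} (hj : 1 ≤ j) : n j ≤ m j :=
  ((Finset.single_le_sum (fun i _ => Nat.zero_le (n i)) (Finset.mem_Icc.mpr ⟨hj, le_rfl⟩)).trans
    (Nat.le_add_right _ _)).trans_eq (hm j).symm

theorem block_end_succ (hm : ∀ j, m j = (∑ i ∈ Finset.Icc 1 j, n i) + (j - 1))
    {j : ℕ} (hj : 1 ≤ j) : m (j + 1) = m j + 1 + n (j + 1) := by
  rw [hm, hm, Finset.sum_Icc_succ_top (by omega)]
  omega

theorem forall_le_of_blocks (hm : ∀ j, m j = (∑ i ∈ Finset.Icc 1 j, n i) + (j - 1))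
    {P : ℕ → Prop}
    (hblock : ∀ j, 1 ≤ j → ∀ i, 1 ≤ i → i ≤ n j → P (m j - n j + i))
    (hsep : ∀ j, 1 ≤ j → P (m j + 1)) {j : ℕ} (hj : 1 ≤ j) :
    ∀ i, 1 ≤ i → i ≤ m j → P i := by
  induction j, hj using Nat.le_induction with
  | base =>
    intro i hi him
    have hm1 : m 1 = n 1 := by simp [hm]
    simpa [hm1] using hblock 1 le_rfl i hi (him.trans_eq hm1)
  | succ j hj ih =>
    intro i hi him
    have hend := block_end_succ hm hj
    rcases lt_trichotomy i (m j + 1) with hlt | rfl | hgt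
    · exact ih i hi (by omega)
    · exact hsep j hj
    · obtain ⟨r, rfl⟩ := Nat.exists_eq_add_of_lt hgt
      convert hblock (j + 1) (by omega) (r + 1) (by omega) (by omega) using 1
      omega

end Blocks

theorem theorem1_key_estimate_general {Θ : LaurentSeries k} (hΘ : ¬ IsRat Θ) {b : ℕ → k[X]}
    (hb : ∀ i, 0 < (b (i + 1)).natDegree) {B u n : ℕ}
    (hB : ∀ i, 1 ≤ i → i ≤ u → (b i).natDegree ≤ B)
    (hmirror : ∀ i, 1 ≤ i → i ≤ n → b (u + i) = pq Θ (n + 1 - i)) :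
    fnorm (emb (den b (u + n)) * Θ) ≤
        (2 : ℝ) ^ (((den b (u + n)).natDegree : ℤ) - 2 * ((den (pq Θ) n).natDegree : ℤ)) ∧
      (2 : ℝ) ^ (((den b (u + n)).natDegree : ℤ) - 2 * ((den (pq Θ) n).natDegree : ℤ)) ≤
        (lnorm (emb (den b (u + n))))⁻¹ * (2 : ℝ) ^ (2 * B * u) := by
  have ha := natDegree_pq_succ_pos hΘ
  have hsu := lnorm_emb_den_pos hb u
  have hmul := lnorm_emb_den_mirror ha hb hmirror
  rw [two_zpow_natDegree_sub (den_ne_zero hb _) (den_ne_zero ha n)]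
  constructor
  · calc fnorm (emb (den b (u + n)) * Θ)
        ≤ lnorm (emb (den b u)) / lnorm (emb (den (pq Θ) n)) :=
          fnorm_den_mul_le_of_mirror hΘ hb hmirror
      _ = lnorm (emb (den b (u + n))) / lnorm (emb (den (pq Θ) n)) ^ 2 := by
          rw [hmul]
          field_simp
  · calc lnorm (emb (den b (u + n))) / lnorm (emb (den (pq Θ) n)) ^ 2
        = (lnorm (emb (den b (u + n))))⁻¹ * lnorm (emb (den b u)) ^ 2 := by
          rw [hmul]
          field_simp
      _ ≤ (lnorm (emb (den b (u + n))))⁻¹ * (2 ^ (B * u)) ^ 2 := by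
          gcongr
          · exact inv_nonneg.mpr (lnorm_nonneg _)
          · exact lnorm_emb_den_le hb hB
      _ = (lnorm (emb (den b (u + n))))⁻¹ * 2 ^ (2 * B * u) := by ring

theorem theorem1_key_estimate {k : Type*} [Field k] (Θ Φ : LaurentSeries k)
    (hΘ : ¬ IsRat Θ) (hΦ : ¬ IsRat Φ) (hnorm : lnorm Θ ≤ 1 / 2) (h0 : pq Θ 0 = 0)
    (M : ℕ) (hdeg : ∀ i : ℕ, (pq Θ i).natDegree ≤ M)
    (n : ℕ → ℕ) (hn : ∀ j : ℕ, 1 ≤ n j)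
    (t : ℕ → Polynomial k)
    (ht : ∀ j : ℕ, (t j).natDegree = M + 1 ∨ (t j).natDegree = M + 2)
    (m : ℕ → ℕ) (hm : ∀ j : ℕ, m j = (∑ i ∈ Finset.Icc 1 j, n i) + (j - 1))
    (hΦ0 : pq Φ 0 = 0)
    (hblock : ∀ j : ℕ, 1 ≤ j → ∀ i : ℕ, 1 ≤ i → i ≤ n j →
      pq Φ (m j - n j + i) = pq Θ (n j + 1 - i))
    (ht' : ∀ j : ℕ, 1 ≤ j → pq Φ (m j + 1) = t j)
    (j : ℕ) (hj : 1 ≤ j) :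
    fnorm (emb (den (pq Φ) (m j)) * Θ) ≤
        (2 : ℝ) ^ (((den (pq Φ) (m j)).natDegree : ℤ)
          - 2 * ((den (pq Θ) (n j)).natDegree : ℤ)) ∧
      (2 : ℝ) ^ (((den (pq Φ) (m j)).natDegree : ℤ)
          - 2 * ((den (pq Θ) (n j)).natDegree : ℤ)) ≤
        (lnorm (emb (den (pq Φ) (m j))))⁻¹ * (2 : ℝ) ^ (2 * (M + 2) * (m j - n j)) := by
  have hdegΦ : ∀ i, 1 ≤ i → i ≤ m j → (pq Φ i).natDegree ≤ M + 2 :=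
    forall_le_of_blocks hm
      (fun l hl i hi hin => by rw [hblock l hl i hi hin]; exact (hdeg _).trans (by omega))
      (fun l hl => by rw [ht' l hl]; have := ht l; omega) hj
  simpa only [Nat.sub_add_cancel (block_length_le hm hj)] using
    theorem1_key_estimate_general hΘ (natDegree_pq_succ_pos hΦ)
      (fun i hi hiu => hdegΦ i hi (by omega)) (hblock j hj)

end Littlewood
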